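/- For every real δ > -3/2 and every complex z, the integral ∫₀¹ sin^{2δ+2}(πx) e^{z x} dx equals Γ(2δ+3) e^{z/2} / (4^{δ+1} Γ(δ+2+iz/(2π)) Γ(δ+2−iz/(2π))). -/

import Mathlib

open Real Complex MeasureTheory intervalIntegral

/-!
Let `L(a) = ∫₀¹ sin^a(πx) e^{zx} dx` and `w = iz/(2π)`. Integrating the second derivative of
`sin^{a+2}(πx)` against `e^{zx}` by parts twice relates `L(a)` to `L(a + 2)`; iterating,
with `(s)_n = s(s+1)⋯(s+n-1)`,
`(a/2+1)_n (a/2+1/2)_n L(a) = (a/2+1+w)_n (a/2+1-w)_n L(a + 2n)`.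
As `n → ∞` the weight `sin^n(πx)` concentrates at `x = 1/2`, so `L(a + 2n)` is asymptotic to
`e^{z/2} ∫₀¹ sin^{2n}(πx) dx`, and this last integral is known from the case `a = z = 0` of the same
identity. Euler's limit formula turns the rising factorials into Gamma values, and Legendre's
duplication formula combines `Γ(a/2+1/2) Γ(a/2+1)`.
-/

open Filter Topology Set

lemma Gamma_one_half_eq_sqrt_pi : Complex.Gamma (1 / 2) = √π := by
  rw [← Real.Gamma_one_half_eq, ← Complex.Gamma_ofReal]
  norm_num

lemma prod_range_add_eq_mul_inv_GammaSeq (s : ℂ) {n : ℕ} (hn : n ≠ 0) :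
    ∏ j ∈ Finset.range (n + 1), (s + j) =
      (n : ℂ) ^ s * (n.factorial : ℂ) * (Complex.GammaSeq s n)⁻¹ := by
  have hcpow : (n : ℂ) ^ s ≠ 0 := by simp [Complex.cpow_eq_zero_iff, hn]
  have hfactorial : (n.factorial : ℂ) ≠ 0 := mod_cast n.factorial_ne_zero
  rw [Complex.GammaSeq, inv_div, mul_div_cancel₀ _ (mul_ne_zero hcpow hfactorial)]

/- At a pole of `Γ` both sides use the convention `0⁻¹ = 0`, which agrees with `1 / Γ` being
entire. -/
lemma tendsto_inv_GammaSeq (s : ℂ) :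
    Tendsto (fun n ↦ (Complex.GammaSeq s n)⁻¹) atTop (𝓝 (Complex.Gamma s)⁻¹) := by
  by_cases hs : Complex.Gamma s = 0
  · obtain ⟨m, rfl⟩ := (Complex.Gamma_eq_zero_iff s).1 hs
    rw [hs, inv_zero]
    refine tendsto_const_nhds.congr' ?_
    filter_upwards [eventually_ge_atTop m] with n hmn
    have hprod : ∏ j ∈ Finset.range (n + 1), (-(m : ℂ) + j) = 0 :=
      Finset.prod_eq_zero (Finset.mem_range.2 (Nat.lt_succ_of_le hmn)) (neg_add_cancel _)
    rw [Complex.GammaSeq, hprod, div_zero, inv_zero]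
  · exact (Complex.GammaSeq_tendsto_Gamma s).inv₀ hs

lemma integral_deriv_deriv_mul_cexp {a b : ℝ} (hab : a ≤ b) {f f' f'' : ℝ → ℂ}
    (hf : ContinuousOn f (Icc a b)) (hf' : ContinuousOn f' (Icc a b))
    (hderiv : ∀ x ∈ Ioo a b, HasDerivAt f (f' x) x)
    (hderiv' : ∀ x ∈ Ioo a b, HasDerivAt f' (f'' x) x)
    (hint : IntervalIntegrable f'' volume a b)
    (hfa : f a = 0) (hfb : f b = 0) (hfa' : f' a = 0) (hfb' : f' b = 0) (z : ℂ) :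
    ∫ x in a..b, f'' x * Complex.exp (z * x) = z ^ 2 * ∫ x in a..b, f x * Complex.exp (z * x) := by
  have hexp (x : ℝ) :
      HasDerivAt (fun x : ℝ ↦ Complex.exp (z * x)) (Complex.exp (z * x) * z) x := by
    simpa using (((hasDerivAt_id (x : ℂ)).const_mul z).cexp).comp_ofReal
  have hint₂ : IntervalIntegrable (fun x : ℝ ↦ f'' x * Complex.exp (z * x)) volume a b :=
    hint.mul_continuousOn (by fun_prop)
  have hint₀ : IntervalIntegrable (fun x : ℝ ↦ f x * Complex.exp (z * x)) volume a b :=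
    (hf.intervalIntegrable_of_Icc hab).mul_continuousOn (by fun_prop)
  have hprimitive := integral_eq_sub_of_hasDerivAt_of_le
    (f := fun x : ℝ ↦ (f' x - z * f x) * Complex.exp (z * x))
    (f' := fun x : ℝ ↦ f'' x * Complex.exp (z * x) - z ^ 2 * (f x * Complex.exp (z * x)))
    hab (by fun_prop)
    (fun x hx ↦ (((hderiv' x hx).sub ((hderiv x hx).const_mul z)).mul (hexp x)).congr_deriv
      (by simp only [Pi.sub_apply]; ring))
    (hint₂.sub (hint₀.const_mul _))
  rw [intervalIntegral.integral_sub hint₂ (hint₀.const_mul _),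
    intervalIntegral.integral_const_mul, hfa, hfb, hfa', hfb'] at hprimitive
  linear_combination hprimitive

lemma sin_pi_mul_pos {x : ℝ} (hx : x ∈ Ioo (0 : ℝ) 1) : 0 < Real.sin (π * x) :=
  Real.sin_pos_of_pos_of_lt_pi (mul_pos pi_pos hx.1) (mul_lt_of_lt_one_right pi_pos hx.2)

lemma sin_pi_mul_nonneg {x : ℝ} (hx : x ∈ Icc (0 : ℝ) 1) : 0 ≤ Real.sin (π * x) :=
  Real.sin_nonneg_of_nonneg_of_le_pi (mul_nonneg pi_pos.le hx.1)
    (mul_le_of_le_one_right pi_pos.le hx.2)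

lemma mul_one_sub_le_sin_pi_mul {x : ℝ} (hx : x ∈ Icc (0 : ℝ) 1) :
    x * (1 - x) ≤ Real.sin (π * x) := by
  have two_mul_le {y : ℝ} (hy₀ : 0 ≤ y) (hy : y ≤ 1 / 2) : 2 * y ≤ Real.sin (π * y) := by
    calc 2 * y = 2 / π * (π * y) := by field_simp
      _ ≤ Real.sin (π * y) := Real.mul_le_sin (by positivity) (by nlinarith [pi_pos])
  obtain ⟨hx₀, hx₁⟩ := hx
  rcases le_total x (1 / 2) with hx | hx
  · nlinarith [two_mul_le hx₀ hx]
  · have hsymm : Real.sin (π * (1 - x)) = Real.sin (π * x) := by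
      rw [mul_sub, mul_one, Real.sin_pi_sub]
    nlinarith [two_mul_le (y := 1 - x) (by linarith) (by linarith)]

lemma sin_pi_mul_lt_one {x : ℝ} (hx : x ∈ Icc (0 : ℝ) 1) (hx_ne : x ≠ 1 / 2) :
    Real.sin (π * x) < 1 := by
  refine (Real.sin_le_one _).lt_of_ne fun hsin ↦ hx_ne ?_
  have hcos : Real.cos (π * x) = Real.cos (π / 2) := by
    rw [Real.cos_pi_div_two]
    nlinarith [Real.sin_sq_add_cos_sq (π * x)]
  have hangle : π * x = π / 2 := Real.injOn_cos
    ⟨mul_nonneg pi_pos.le hx.1, mul_le_of_le_one_right pi_pos.le hx.2⟩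
    ⟨by positivity, by linarith [pi_pos]⟩ hcos
  exact mul_left_cancel₀ pi_ne_zero (hangle.trans (by ring))

/-- The complex power `sin^a(πx)`, for `x` in `[0, 1]`. At the endpoints `x = 0, 1` it is `0`,
unless `a = 0`. -/
noncomputable def sinPow (a : ℂ) (x : ℝ) : ℂ :=
  (Real.sin (π * x) : ℂ) ^ a

namespace sinPow

variable {a : ℂ}

lemma apply_zero (ha : a ≠ 0) : sinPow a 0 = 0 := by
  simp [sinPow, ha]

lemma apply_one (ha : a ≠ 0) : sinPow a 1 = 0 := by
  simp [sinPow, ha]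

lemma apply_one_half (a : ℂ) : sinPow a (1 / 2) = 1 := by
  rw [sinPow, mul_one_div, Real.sin_pi_div_two, Complex.ofReal_one, Complex.one_cpow]

lemma add_natCast (a : ℂ) (n : ℕ) {x : ℝ} (hx : x ∈ Ioo (0 : ℝ) 1) :
    sinPow (a + n) x = (Real.sin (π * x) ^ n : ℝ) * sinPow a x := by
  have hsin : (Real.sin (π * x) : ℂ) ≠ 0 := mod_cast (sin_pi_mul_pos hx).ne'
  rw [sinPow, sinPow, Complex.cpow_add _ _ hsin, Complex.cpow_natCast, mul_comm,
    Complex.ofReal_pow]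

lemma continuous (ha : 0 < a.re) : Continuous (sinPow a) :=
  (Complex.continuous_ofReal_cpow_const ha).comp (by fun_prop : Continuous fun x ↦ Real.sin (π * x))

lemma hasDerivAt (a : ℂ) {x : ℝ} (hx : x ∈ Ioo (0 : ℝ) 1) :
    HasDerivAt (sinPow a) (a * π * (sinPow (a - 1) x * Real.cos (π * x))) x := by
  have hsin : HasDerivAt (fun w : ℂ ↦ Complex.sin (π * w)) (Complex.cos (π * x) * π) x := by
    simpa using ((hasDerivAt_id (x : ℂ)).const_mul (π : ℂ)).csin
  have hslit : Complex.sin (π * x) ∈ Complex.slitPlane := by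
    exact_mod_cast Complex.ofReal_mem_slitPlane.2 (sin_pi_mul_pos hx)
  have hpow := (hsin.cpow_const (c := a) hslit).comp_ofReal
  have hsinPow : sinPow a = fun x : ℝ ↦ Complex.sin (π * x) ^ a := by
    funext x
    push_cast [sinPow]
    rfl
  rw [hsinPow]
  refine hpow.congr_deriv ?_
  push_cast [sinPow]
  ring

lemma hasDerivAt_deriv (a : ℂ) {x : ℝ} (hx : x ∈ Ioo (0 : ℝ) 1) :
    HasDerivAt (fun x ↦ (a + 2) * π * (sinPow (a + 1) x * Real.cos (π * x)))
      (π ^ 2 * ((a + 2) * (a + 1) * sinPow a x - (a + 2) ^ 2 * sinPow (a + 2) x)) x := by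
  have hcos : HasDerivAt (fun x : ℝ ↦ (Real.cos (π * x) : ℂ)) (-Real.sin (π * x) * π : ℝ) x := by
    simpa using (((hasDerivAt_id x).const_mul π).cos).ofReal_comp
  refine (((hasDerivAt (a + 1) hx).mul hcos).const_mul _).congr_deriv ?_
  have hpow_one := add_natCast a 1 hx
  have hpow_two := add_natCast a 2 hx
  have hpythagoras : (Real.cos (π * x) : ℂ) ^ 2 = 1 - (Real.sin (π * x) : ℂ) ^ 2 :=
    mod_cast Real.cos_sq' (π * x)
  push_cast at hpow_one hpow_two hpythagoras ⊢
  rw [add_sub_cancel_right, hpow_one, hpow_two]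
  linear_combination ((a + 2) * (a + 1) * π ^ 2 * sinPow a x) * hpythagoras

lemma intervalIntegrable (ha : -1 < a.re) : IntervalIntegrable (sinPow a) volume 0 1 := by
  set r := min a.re 0
  have hr : -1 < r := lt_min ha (by norm_num)
  have hr_re : 0 < (r + 1 : ℂ).re := by simpa using neg_lt_iff_pos_add.1 hr
  refine (Complex.betaIntegral_convergent hr_re hr_re).mono_fun ?_ ?_
  · exact (by unfold sinPow; fun_prop : Measurable (sinPow a)).aestronglyMeasurable
  rw [uIoc_of_le zero_le_one, ← restrict_Ioo_eq_restrict_Ioc]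
  filter_upwards [ae_restrict_mem measurableSet_Ioo] with x hx
  have hsin := sin_pi_mul_pos hx
  have hx₁ : 0 < 1 - x := sub_pos.2 hx.2
  have hbeta : ‖(x : ℂ) ^ (r + 1 - 1 : ℂ) * (1 - (x : ℂ)) ^ (r + 1 - 1 : ℂ)‖
      = (x * (1 - x)) ^ r := by
    rw [norm_mul, add_sub_cancel_right, ← Complex.ofReal_one, ← Complex.ofReal_sub,
      Complex.norm_cpow_eq_rpow_re_of_pos hx.1, Complex.norm_cpow_eq_rpow_re_of_pos hx₁,
      Complex.ofReal_re, Real.mul_rpow hx.1.le hx₁.le]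
  rw [hbeta]
  calc ‖sinPow a x‖ = Real.sin (π * x) ^ a.re := Complex.norm_cpow_eq_rpow_re_of_pos hsin a
    _ ≤ Real.sin (π * x) ^ r :=
      Real.rpow_le_rpow_of_exponent_ge hsin (Real.sin_le_one _) (min_le_left _ _)
    _ ≤ (x * (1 - x)) ^ r :=
      Real.rpow_le_rpow_of_nonpos (mul_pos hx.1 hx₁)
        (mul_one_sub_le_sin_pi_mul (Ioo_subset_Icc_self hx)) (min_le_right _ _)

lemma intervalIntegrable_mul_cexp (ha : -1 < a.re) (z : ℂ) :
    IntervalIntegrable (fun x ↦ sinPow a x * Complex.exp (z * x)) volume 0 1 :=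
  (intervalIntegrable ha).mul_continuousOn (by fun_prop)

end sinPow

/-- The finite Laplace transform `∫₀¹ sin^a(πx) e^{zx} dx`. The integral converges for
`-1 < re a`. -/
noncomputable def sinPowLaplace (a z : ℂ) : ℂ :=
  ∫ x in (0 : ℝ)..1, sinPow a x * Complex.exp (z * x)

namespace sinPowLaplace

variable {a : ℂ}

lemma zero_zero : sinPowLaplace 0 0 = 1 := by
  simp [sinPowLaplace, sinPow]

lemma pi_sq_mul_sub_eq_sq_mul (ha : -1 < a.re) (z : ℂ) :
    π ^ 2 * ((a + 2) * (a + 1) * sinPowLaplace a z - (a + 2) ^ 2 * sinPowLaplace (a + 2) z) =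
      z ^ 2 * sinPowLaplace (a + 2) z := by
  have hre_one : 0 < (a + 1).re := by simpa using neg_lt_iff_pos_add.1 ha
  have hre_two : 0 < (a + 2).re := by simp; linarith
  have ha_one : a + 1 ≠ 0 := fun h ↦ by simp [h] at hre_one
  have ha_two : a + 2 ≠ 0 := fun h ↦ by simp [h] at hre_two
  have hint := sinPow.intervalIntegrable ha
  have hint_two := sinPow.intervalIntegrable (a := a + 2) (by linarith)
  have hparts := integral_deriv_deriv_mul_cexp zero_le_one (sinPow.continuous hre_two).continuousOn
    (f' := fun x ↦ (a + 2) * π * (sinPow (a + 1) x * Real.cos (π * x)))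
    (((sinPow.continuous hre_one).mul (by fun_prop)).const_mul _).continuousOn
    (fun x hx ↦ (sinPow.hasDerivAt (a + 2) hx).congr_deriv
      (by rw [show a + 2 - 1 = a + 1 by ring]))
    (fun x hx ↦ sinPow.hasDerivAt_deriv a hx)
    (((hint.const_mul _).sub (hint_two.const_mul _)).const_mul _)
    (sinPow.apply_zero ha_two) (sinPow.apply_one ha_two)
    (by simp [sinPow.apply_zero ha_one]) (by simp [sinPow.apply_one ha_one]) z
  rw [sinPowLaplace, sinPowLaplace, ← hparts]
  simp only [← intervalIntegral.integral_const_mul]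
  rw [← intervalIntegral.integral_sub
    ((sinPow.intervalIntegrable_mul_cexp ha z).const_mul _)
    ((sinPow.intervalIntegrable_mul_cexp (by linarith) z).const_mul _),
    ← intervalIntegral.integral_const_mul]
  congr! 2
  ring

lemma recurrence (ha : -1 < a.re) (z : ℂ) :
    (a / 2 + 1) * (a / 2 + 1 / 2) * sinPowLaplace a z =
      (a / 2 + 1 + Complex.I * z / (2 * π)) * (a / 2 + 1 - Complex.I * z / (2 * π)) *
        sinPowLaplace (a + 2) z := by
  have hpi : (π : ℂ) ≠ 0 := mod_cast pi_ne_zero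
  field_simp
  linear_combination pi_sq_mul_sub_eq_sq_mul ha z + z ^ 2 * sinPowLaplace (a + 2) z * Complex.I_sq

lemma prod_mul_eq_prod_mul_add_two_mul (ha : -1 < a.re) (z : ℂ) (n : ℕ) :
    (∏ k ∈ Finset.range n, (a / 2 + 1 + k)) * (∏ k ∈ Finset.range n, (a / 2 + 1 / 2 + k)) *
        sinPowLaplace a z =
      (∏ k ∈ Finset.range n, (a / 2 + 1 + Complex.I * z / (2 * π) + k)) *
        (∏ k ∈ Finset.range n, (a / 2 + 1 - Complex.I * z / (2 * π) + k)) *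
        sinPowLaplace (a + 2 * n) z := by
  induction n with
  | zero => simp
  | succ n ih =>
    have hre : -1 < (a + 2 * n).re := by
      have : (a + 2 * n).re = a.re + 2 * n := by simp
      linarith [n.cast_nonneg (α := ℝ)]
    have hstep := recurrence hre z
    rw [show a + 2 * n + 2 = a + 2 * (n + 1 : ℕ) by push_cast; ring] at hstep
    simp only [Finset.prod_range_succ]
    linear_combination (a / 2 + 1 + n) * (a / 2 + 1 / 2 + n) * ih +
      (∏ k ∈ Finset.range n, (a / 2 + 1 + Complex.I * z / (2 * π) + k)) *
        (∏ k ∈ Finset.range n, (a / 2 + 1 - Complex.I * z / (2 * π) + k)) * hstep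

lemma inv_GammaSeq_mul_eq (ha : -1 < a.re) (z : ℂ) {n : ℕ} (hn : n ≠ 0) :
    (Complex.GammaSeq (a / 2 + 1) n)⁻¹ * (Complex.GammaSeq (a / 2 + 1 / 2) n)⁻¹ *
        sinPowLaplace a z =
      (Complex.GammaSeq (a / 2 + 1 + Complex.I * z / (2 * π)) n)⁻¹ *
        (Complex.GammaSeq (a / 2 + 1 - Complex.I * z / (2 * π)) n)⁻¹ *
        ((n : ℂ) ^ (1 / 2 : ℂ) * sinPowLaplace (a + 2 * (n + 1 : ℕ)) z) := by
  have hprod := prod_mul_eq_prod_mul_add_two_mul ha z (n + 1)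
  simp only [prod_range_add_eq_mul_inv_GammaSeq _ hn] at hprod
  have hn' : (n : ℂ) ≠ 0 := mod_cast hn
  have hpow : (n : ℂ) ^ (a / 2 + 1 + Complex.I * z / (2 * π)) *
      (n : ℂ) ^ (a / 2 + 1 - Complex.I * z / (2 * π)) =
      (n : ℂ) ^ (a / 2 + 1) * (n : ℂ) ^ (a / 2 + 1 / 2) * (n : ℂ) ^ (1 / 2 : ℂ) := by
    simp only [← Complex.cpow_add _ _ hn']
    ring_nf
  have hscale : (n : ℂ) ^ (a / 2 + 1) * (n : ℂ) ^ (a / 2 + 1 / 2) * (n.factorial : ℂ) ^ 2 ≠ 0 := by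
    simp [Complex.cpow_eq_zero_iff, hn, n.factorial_ne_zero]
  refine mul_left_cancel₀ hscale ?_
  linear_combination hprod + (n.factorial : ℂ) ^ 2 *
    (Complex.GammaSeq (a / 2 + 1 + Complex.I * z / (2 * π)) n)⁻¹ *
    (Complex.GammaSeq (a / 2 + 1 - Complex.I * z / (2 * π)) n)⁻¹ *
    sinPowLaplace (a + 2 * (n + 1 : ℕ)) z * hpow

lemma add_natCast_eq_setIntegral (a z : ℂ) (n : ℕ) :
    sinPowLaplace (a + n) z =
      ∫ x in Icc (0 : ℝ) 1, Real.sin (π * x) ^ n • (sinPow a x * Complex.exp (z * x)) := by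
  rw [sinPowLaplace, intervalIntegral.integral_of_le zero_le_one, integral_Icc_eq_integral_Ioo,
    integral_Ioc_eq_integral_Ioo]
  refine setIntegral_congr_fun measurableSet_Ioo fun x hx ↦ ?_
  simp only [sinPow.add_natCast a n hx, Complex.real_smul, mul_assoc]

lemma natCast_zero_eq_setIntegral (n : ℕ) :
    sinPowLaplace n 0 = (∫ x in Icc (0 : ℝ) 1, Real.sin (π * x) ^ n : ℝ) := by
  rw [sinPowLaplace, intervalIntegral.integral_of_le zero_le_one, integral_Icc_eq_integral_Ioc,
    ← integral_complex_ofReal]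
  simp [sinPow]

lemma tendsto_div_natCast_zero (ha : -1 < a.re) (z : ℂ) :
    Tendsto (fun n : ℕ ↦ sinPowLaplace (a + n) z / sinPowLaplace n 0) atTop
      (𝓝 (Complex.exp (z / 2))) := by
  have hsin_half : Real.sin (π * (1 / 2)) = 1 := by rw [mul_one_div, Real.sin_pi_div_two]
  have hcont : ContinuousAt (fun x : ℝ ↦ sinPow a x * Complex.exp (z * x)) (1 / 2) :=
    (sinPow.hasDerivAt a (by norm_num)).continuousAt.mul (by fun_prop)
  have hpeak := tendsto_setIntegral_pow_smul_of_unique_maximum_of_isCompact_of_integrableOn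
    (μ := volume) (c := fun x ↦ Real.sin (π * x)) (x₀ := 1 / 2) isCompact_Icc (by fun_prop)
    (fun x hx hx_ne ↦ (sin_pi_mul_lt_one hx hx_ne).trans_eq hsin_half.symm)
    (fun x hx ↦ sin_pi_mul_nonneg hx)
    (by rw [hsin_half]; exact one_pos)
    (by rw [interior_Icc, closure_Ioo zero_ne_one]; norm_num)
    ((intervalIntegrable_iff_integrableOn_Icc_of_le zero_le_one).1
      (sinPow.intervalIntegrable_mul_cexp ha z)) hcont.continuousWithinAt
  have hvalue : sinPow a (1 / 2) * Complex.exp (z * (1 / 2 : ℝ)) = Complex.exp (z / 2) := by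
    rw [sinPow.apply_one_half, one_mul]
    push_cast
    ring_nf
  rw [hvalue] at hpeak
  refine hpeak.congr fun n ↦ ?_
  rw [add_natCast_eq_setIntegral, natCast_zero_eq_setIntegral, Complex.real_smul,
    Complex.ofReal_inv, div_eq_inv_mul]

lemma tendsto_sqrt_mul_two_mul_zero :
    Tendsto (fun n : ℕ ↦ (n : ℂ) ^ (1 / 2 : ℂ) * sinPowLaplace (2 * (n + 1 : ℕ)) 0) atTop
      (𝓝 (√π : ℂ)⁻¹) := by
  have hone : Tendsto (Complex.GammaSeq 1) atTop (𝓝 1) := by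
    simpa using Complex.GammaSeq_tendsto_Gamma 1
  have hlim := hone.mul (tendsto_inv_GammaSeq (1 / 2))
  rw [one_mul, Gamma_one_half_eq_sqrt_pi] at hlim
  refine hlim.congr' ?_
  filter_upwards [eventually_ne_atTop 0, hone.eventually_ne one_ne_zero] with n hn hG
  have hseq := inv_GammaSeq_mul_eq (a := 0) (by simp) 0 hn
  simp only [zero_div, zero_add, mul_zero, add_zero, sub_zero, zero_zero, mul_one] at hseq
  have hcancel := mul_left_cancel₀ (inv_ne_zero hG) (hseq.trans (mul_assoc _ _ _))
  rw [hcancel, mul_inv_cancel_left₀ hG]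

lemma tendsto_sqrt_mul_add_two_mul (ha : -1 < a.re) (z : ℂ) :
    Tendsto (fun n : ℕ ↦ (n : ℂ) ^ (1 / 2 : ℂ) * sinPowLaplace (a + 2 * (n + 1 : ℕ)) z) atTop
      (𝓝 ((√π : ℂ)⁻¹ * Complex.exp (z / 2))) := by
  have hsqrt : (√π : ℂ) ≠ 0 := mod_cast (Real.sqrt_pos.2 pi_pos).ne'
  have heven : Tendsto (fun n : ℕ ↦ 2 * (n + 1)) atTop atTop :=
    tendsto_atTop_mono (fun n ↦ by simp only [id]; omega) tendsto_id
  have hratio := (tendsto_div_natCast_zero ha z).comp heven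
  refine (tendsto_sqrt_mul_two_mul_zero.mul hratio).congr' ?_
  filter_upwards [tendsto_sqrt_mul_two_mul_zero.eventually_ne (inv_ne_zero hsqrt)] with n hn
  have hne := right_ne_zero_of_mul hn
  push_cast [Function.comp_apply] at hne ⊢
  field_simp

theorem eq_Gamma_mul_cexp_div (ha : -1 < a.re) (z : ℂ) :
    sinPowLaplace a z = Complex.Gamma (a + 1) * Complex.exp (z / 2) /
      (2 ^ a * Complex.Gamma (a / 2 + 1 + Complex.I * z / (2 * π)) *
        Complex.Gamma (a / 2 + 1 - Complex.I * z / (2 * π))) := by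
  have hlimit := tendsto_nhds_unique_of_eventuallyEq
    (((tendsto_inv_GammaSeq (a / 2 + 1)).mul (tendsto_inv_GammaSeq (a / 2 + 1 / 2))).mul_const
      (sinPowLaplace a z))
    (((tendsto_inv_GammaSeq (a / 2 + 1 + Complex.I * z / (2 * π))).mul
      (tendsto_inv_GammaSeq (a / 2 + 1 - Complex.I * z / (2 * π)))).mul
      (tendsto_sqrt_mul_add_two_mul ha z))
    ((eventually_ne_atTop 0).mono fun n hn ↦ inv_GammaSeq_mul_eq ha z hn)
  have hduplication : Complex.Gamma (a / 2 + 1) * Complex.Gamma (a / 2 + 1 / 2) =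
      Complex.Gamma (a + 1) * (2 ^ a)⁻¹ * √π := by
    rw [mul_comm (Complex.Gamma (a / 2 + 1)), ← Complex.cpow_neg]
    convert Complex.Gamma_mul_Gamma_add_half (a / 2 + 1 / 2) using 3 <;> ring_nf
  have hGamma₁ : Complex.Gamma (a / 2 + 1) ≠ 0 :=
    Complex.Gamma_ne_zero_of_re_pos (by simp; linarith)
  have hGamma₂ : Complex.Gamma (a / 2 + 1 / 2) ≠ 0 :=
    Complex.Gamma_ne_zero_of_re_pos (by simp; linarith)
  have hsqrt : (√π : ℂ) ≠ 0 := mod_cast (Real.sqrt_pos.2 pi_pos).ne'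
  rw [← mul_inv, inv_mul_eq_iff_eq_mul₀ (mul_ne_zero hGamma₁ hGamma₂), hduplication] at hlimit
  rw [hlimit]
  field_simp

end sinPowLaplace

theorem poschl_teller_sine_integral_general (δ : ℂ) (hδ : -3 / 2 < δ.re) (z : ℂ) :
    ∫ x in (0 : ℝ)..1, (Real.sin (π * x) : ℂ) ^ (2 * δ + 2) * Complex.exp (z * x)
      = Complex.Gamma (2 * δ + 3) * Complex.exp (z / 2) /
        (4 ^ (δ + 1) * Complex.Gamma (δ + 2 + Complex.I * z / (2 * π)) *
          Complex.Gamma (δ + 2 - Complex.I * z / (2 * π))) := by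
  have hfour : (4 : ℂ) ^ (δ + 1) = 2 ^ (2 * δ + 2) := by
    rw [show 2 * δ + 2 = 2 * (δ + 1) by ring, Complex.cpow_ofNat_mul']
    · norm_num
    all_goals simp [pi_pos, pi_pos.le]
  have hLaplace := sinPowLaplace.eq_Gamma_mul_cexp_div (a := 2 * δ + 2) (by simp; linarith) z
  rw [show (2 * δ + 2) / 2 + 1 = δ + 2 by ring, show 2 * δ + 2 + 1 = 2 * δ + 3 by ring, ← hfour]
    at hLaplace
  exact hLaplace

theorem poschl_teller_sine_integral (δ : ℝ) (hδ : δ > -3/2) (z : ℂ) :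
    ∫ x in (0:ℝ)..1, (((Real.sin (Real.pi * x)) ^ (2*δ+2) : ℝ) : ℂ) * Complex.exp (z * x)
      = Complex.Gamma (2*δ+3) * Complex.exp (z/2) /
        ((4:ℂ) ^ ((δ:ℂ)+1) * Complex.Gamma ((δ:ℂ)+2 + Complex.I * z / (2*Real.pi)) *
          Complex.Gamma ((δ:ℂ)+2 - Complex.I * z / (2*Real.pi))) := by
  rw [← poschl_teller_sine_integral_general δ (by simpa using hδ) z]
  refine intervalIntegral.integral_congr fun x hx ↦ ?_
  simp [Complex.ofReal_cpow (sin_pi_mul_nonneg (uIcc_of_le (zero_le_one (α := ℝ)) ▸ hx))]
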